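/- arXiv:1907.12243 — 2 statements merged into one kernel-verified Lean document; each statement's English description precedes it below -/
import Mathlib

section
/- If the discrete Sobolev inner product ⟨·,·⟩ is sequentially-ordered, then for every n the Sobolev orthogonal polynomial S_n has at least n − N changes of sign on the open interval (−1,1), i.e., there exist at least n − N points in (−1,1) at which S_n changes sign. -/
open MeasureTheory Polynomial Filter
open scoped Classical

noncomputable section

/-- The discrete Sobolev inner product with a single derivative order `d j` at each
mass point `c j`, with weight `η j`. -/
def sobInner (μ : Measure ℝ) {N : ℕ} (c : Fin N → ℝ) (d : Fin N → ℕ) (η : Fin N → ℝ)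
    (f g : Polynomial ℝ) : ℝ :=
  (∫ x in Set.Icc (-1:ℝ) 1, f.eval x * g.eval x ∂μ) +
    ∑ j, η j * ((derivative^[d j] f).eval (c j)) * ((derivative^[d j] g).eval (c j))

/-- The general discrete Sobolev inner product with weights `η j i` for the `i`-th
derivatives, `0 ≤ i ≤ d j`, at each mass point `c j`. -/
def sobInner2 (μ : Measure ℝ) {N : ℕ} (c : Fin N → ℝ) (d : Fin N → ℕ) (η : Fin N → ℕ → ℝ)
    (f g : Polynomial ℝ) : ℝ :=
  (∫ x in Set.Icc (-1:ℝ) 1, f.eval x * g.eval x ∂μ) +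
    ∑ j, ∑ i ∈ Finset.range (d j + 1),
      η j i * ((derivative^[i] f).eval (c j)) * ((derivative^[i] g).eval (c j))

/-- Sequential order for the data of a discrete Sobolev inner product:
`d` is nondecreasing and each `c k` lies outside the convex hull of
`(-1,1) ∪ {c 1, …, c (k-1)}`. -/
def SeqOrdered {N : ℕ} (c : Fin N → ℝ) (d : Fin N → ℕ) : Prop :=
  (∀ i j : Fin N, i ≤ j → d i ≤ d j) ∧
    ∀ k : Fin N, c k ∉ convexHull ℝ (Set.Ioo (-1:ℝ) 1 ∪ c '' {j : Fin N | j < k})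

/-- The polynomial ρ(x) = ∏_{c j < -1} (x - c j)^(d j + 1) · ∏_{c j > 1} (c j - x)^(d j + 1). -/
def rhoPoly {N : ℕ} (c : Fin N → ℝ) (d : Fin N → ℕ) : Polynomial ℝ :=
  (∏ j ∈ Finset.univ.filter (fun j => c j < -1), (X - C (c j)) ^ (d j + 1)) *
    ∏ j ∈ Finset.univ.filter (fun j => (1:ℝ) < c j), (C (c j) - X) ^ (d j + 1)

/-- ν = number of mass points greater than 1. -/
def nuCount {N : ℕ} (c : Fin N → ℝ) : ℕ :=
  (Finset.univ.filter (fun j : Fin N => (1:ℝ) < c j)).card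

/-- μ belongs to the Nevai class M(0,1): supp μ = [-1,1] and the monic orthogonal
polynomials of μ satisfy a three-term recurrence with aₙ → 1/2 and bₙ → 0. -/
def NevaiClass (μ : Measure ℝ) : Prop :=
  μ (Set.Icc (-1:ℝ) 1)ᶜ = 0 ∧
  (∀ x ∈ Set.Icc (-1:ℝ) 1, ∀ ε > 0, 0 < μ (Metric.ball x ε)) ∧
  ∃ (P : ℕ → Polynomial ℝ) (a b : ℕ → ℝ),
    (∀ n, (P n).Monic) ∧ (∀ n, (P n).natDegree = n) ∧
    (∀ n, ∀ m < n, (∫ x in Set.Icc (-1:ℝ) 1, x ^ m * (P n).eval x ∂μ) = 0) ∧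
    P 0 = 1 ∧ P 1 = X - C (b 0) ∧
    (∀ n, P (n + 2) = (X - C (b (n + 1))) * P (n + 1) - C ((a (n + 1)) ^ 2) * P n) ∧
    Tendsto a atTop (nhds (1 / 2)) ∧ Tendsto b atTop (nhds 0)

/-- The segment [-1,1] regarded as a subset of ℂ. -/
def segIcc : Set ℂ := Complex.ofReal '' Set.Icc (-1:ℝ) 1

/-- Markov-type function: z ↦ ∫ q(x) / (z - x) w(x) dμ(x). -/
def markovHat (μ : Measure ℝ) (w q : Polynomial ℝ) (z : ℂ) : ℂ :=
  ∫ x in Set.Icc (-1:ℝ) 1, ((q.eval x * w.eval x : ℝ) : ℂ) / (z - (x : ℂ)) ∂μ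

/-- Associated function: z ↦ ∫ (p(z) - p(x)) / (z - x) · q(x) w(x) dμ(x). -/
def assocFun (μ : Measure ℝ) (w q p : Polynomial ℝ) (z : ℂ) : ℂ :=
  ∫ x in Set.Icc (-1:ℝ) 1,
    ((aeval z p - ((p.eval x : ℝ) : ℂ)) / (z - (x : ℂ))) * ((q.eval x * w.eval x : ℝ) : ℂ) ∂μ

/-- A function changes sign at `t` if arbitrarily close to `t`, on the left and right,
it takes values of opposite signs. -/
def SignChangeAt (p : Polynomial ℝ) (t : ℝ) : Prop :=
  ∀ δ > 0, ∃ x ∈ Set.Ioo (t - δ) t, ∃ y ∈ Set.Ioo t (t + δ), p.eval x * p.eval y < 0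

/-- N₀(f; A): number of zeros of `f` in `A`, counted with multiplicity. -/
def N0 (f : Polynomial ℝ) (A : Set ℝ) : ℕ :=
  (f.roots.filter (fun x => x ∈ A)).card

/-!
Let `T` be the set of roots of `S n` of odd multiplicity in `(-1, 1)`; these are points of sign
change. If `|T| + N < n`, look for a nonzero `Q` of degree less than `n` that vanishes on `T` and
satisfies `Q^(d j) (c j) = 0` for all `j`. The discrete part of `⟨Q, S n⟩` is then zero, so
orthogonality says `∫ Q S n dμ = 0`. This is absurd as soon as `Q` has no zeros in `(-1, 1)` other
than simple ones at `T`, for then `Q * S n` has constant sign on `[-1, 1]`.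

For a nonzero `Q` of degree less than `D` to exist it is enough that
`|T| + #{j | d j < D} < D`, since conditions with `d j ≥ D` are automatic. Take `D` least with this
property, so that `D ≤ |T| + N + 1`. Applying Rolle's theorem between consecutive orders
`d j`, and gaining one zero at each `c j` because it lies outside the hull of what came before,
shows that the zeros of `Q` in `(-1, 1)`, counted with multiplicity, number at most
`deg Q - #{j | d j ≤ deg Q}`. A zero of `Q` beyond `T` would therefore make `deg Q < D` satisfy
the inequality defining `D`.
-/

open scoped Finset

section RootCounting

variable {p q : ℝ[X]} {A B : Set ℝ}

lemma N0_mono (p : ℝ[X]) (hAB : A ⊆ B) : N0 p A ≤ N0 p B :=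
  Multiset.card_le_card (Multiset.monotone_filter_right _ fun _ hx => hAB hx)

lemma N0_le_natDegree (p : ℝ[X]) (A : Set ℝ) : N0 p A ≤ p.natDegree :=
  (Multiset.card_le_card (Multiset.filter_le _ _)).trans p.card_roots'

lemma N0_lt_N0_of_mem_diff (hp : p ≠ 0) (hAB : A ⊆ B) {x : ℝ} (hx : x ∈ B \ A)
    (hroot : p.IsRoot x) : N0 p A < N0 p B := by
  refine Multiset.card_lt_card (lt_of_le_of_ne
    (Multiset.monotone_filter_right _ fun _ hy => hAB hy) fun heq => hx.2 ?_)
  have hxB : x ∈ p.roots.filter (· ∈ B) := Multiset.mem_filter.2 ⟨(mem_roots hp).2 hroot, hx.1⟩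
  rw [← heq] at hxB
  exact (Multiset.mem_filter.1 hxB).2

lemma card_lt_N0_of_isRoot_cofactor (hp : p ≠ 0) {M : Multiset ℝ} (hM : ∀ x ∈ M, x ∈ A)
    (hpq : p = (M.map fun x => X - C x).prod * q) {a : ℝ} (ha : a ∈ A) (hroot : q.IsRoot a) :
    M.card < N0 p A := by
  obtain ⟨r, rfl⟩ := dvd_iff_isRoot.2 hroot
  have hle : a ::ₘ M ≤ p.roots := by
    rw [← Multiset.prod_X_sub_C_dvd_iff_le_roots hp, Multiset.map_cons, Multiset.prod_cons]
    exact ⟨r, by rw [hpq]; ring⟩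
  have hmem : ∀ x ∈ a ::ₘ M, x ∈ A := by simpa [ha] using hM
  calc M.card < (a ::ₘ M).card := by simp
    _ ≤ N0 p A := Multiset.card_le_card (Multiset.le_filter.2 ⟨hle, hmem⟩)

end RootCounting

section Rolle

lemma card_add_card_toFinset_sdiff_le {α : Type*} [DecidableEq α] {M M' : Multiset α}
    (h : ∀ x ∈ M, M.count x ≤ M'.count x + 1) :
    M.card + #(M'.toFinset \ M.toFinset) ≤ M'.card + #M.toFinset := by
  suffices hle : M + (M'.toFinset \ M.toFinset).val ≤ M' + M.toFinset.val by
    simpa only [Multiset.card_add, Finset.card_val] using Multiset.card_le_card hle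
  refine Multiset.le_iff_count.2 fun x => ?_
  simp only [Multiset.count_add, Multiset.count_eq_of_nodup (Finset.nodup _), Finset.mem_val,
    Finset.mem_sdiff, Multiset.mem_toFinset]
  by_cases hx : x ∈ M
  · simpa [hx] using h x hx
  · by_cases hx' : x ∈ M'
    · simpa [hx, hx'] using Multiset.one_le_count_iff_mem.2 hx'
    · simp [hx, hx']

variable {p : ℝ[X]} {A : Set ℝ}

lemma card_rootsIn_le_card_derivative_rootsIn_sdiff (hp' : derivative p ≠ 0)
    (hA : A.OrdConnected) :
    #(p.roots.filter (· ∈ A)).toFinset ≤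
      #(((derivative p).roots.filter (· ∈ A)).toFinset \ (p.roots.filter (· ∈ A)).toFinset)
        + 1 := by
  have hp : p ≠ 0 := ne_of_apply_ne derivative (by rwa [derivative_zero])
  refine Finset.card_le_sdiff_of_interleaved fun x hx y hy hxy _ => ?_
  simp only [Multiset.mem_toFinset, Multiset.mem_filter, mem_roots hp, mem_roots hp'] at hx hy ⊢
  obtain ⟨z, hz, hderiv⟩ := exists_deriv_eq_zero hxy p.continuousOn (hx.1.trans hy.1.symm)
  exact ⟨z, ⟨by rwa [IsRoot, ← p.deriv], hA.out hx.2 hy.2 ⟨hz.1.le, hz.2.le⟩⟩, hz⟩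

lemma N0_le_N0_derivative_add_one (p : ℝ[X]) (hA : A.OrdConnected) :
    N0 p A ≤ N0 (derivative p) A + 1 := by
  rcases eq_or_ne (derivative p) 0 with hp' | hp'
  · rw [eq_C_of_derivative_eq_zero hp']
    simp [N0]
  have hrolle := card_rootsIn_le_card_derivative_rootsIn_sdiff hp' hA
  have hmult : ∀ x ∈ p.roots.filter (· ∈ A), (p.roots.filter (· ∈ A)).count x ≤
      ((derivative p).roots.filter (· ∈ A)).count x + 1 := fun x hx => by
    have hxA : x ∈ A := (Multiset.mem_filter.1 hx).2
    rw [Multiset.count_filter_of_pos hxA, Multiset.count_filter_of_pos hxA, count_roots,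
      count_roots]
    have := rootMultiplicity_sub_one_le_derivative_rootMultiplicity p x
    omega
  have hcard := card_add_card_toFinset_sdiff_le hmult
  unfold N0
  omega

lemma N0_le_N0_iterate_derivative_add (p : ℝ[X]) (hA : A.OrdConnected) (k : ℕ) :
    N0 p A ≤ N0 (derivative^[k] p) A + k := by
  induction k with
  | zero => rfl
  | succ k ih =>
    rw [Function.iterate_succ_apply']
    have := N0_le_N0_derivative_add_one (derivative^[k] p) hA
    omega

end Rolle

section IteratedDerivative

variable {R : Type*} [Semiring R] [IsAddTorsionFree R]

lemma natDegree_iterate_derivative_eq (p : R[X]) (k : ℕ) :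
    (derivative^[k] p).natDegree = p.natDegree - k := by
  induction k with
  | zero => rfl
  | succ k ih => rw [Function.iterate_succ_apply', natDegree_derivative, ih, Nat.sub_sub]

lemma iterate_derivative_ne_zero_of_le_natDegree {p : R[X]} (hp : p ≠ 0) {k : ℕ}
    (hk : k ≤ p.natDegree) : derivative^[k] p ≠ 0 := by
  cases k with
  | zero => exact hp
  | succ k =>
    rw [Function.iterate_succ_apply', derivative_ne_zero, natDegree_iterate_derivative_eq]
    omega

end IteratedDerivative

/-- Sequential order of the mass points `c` with derivative orders `d`, relative to an arbitrary
base set `A` in place of `(-1, 1)`. Letting `A` vary allows the first mass point to be absorbed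
into it. -/
def SeqOrderedOver (A : Set ℝ) {N : ℕ} (c : Fin N → ℝ) (d : Fin N → ℕ) : Prop :=
  Monotone d ∧ ∀ k, c k ∉ convexHull ℝ (A ∪ c '' Set.Iio k)

section SequentialOrder

variable {A : Set ℝ} {N : ℕ}

lemma SeqOrderedOver.tail {c : Fin (N + 1) → ℝ} {d : Fin (N + 1) → ℕ}
    (h : SeqOrderedOver A c d) :
    SeqOrderedOver (insert (c 0) A) (fun j => c j.succ) (fun j => d j.succ - d 0) := by
  refine ⟨fun i j hij => Nat.sub_le_sub_right (h.1 (Fin.succ_le_succ_iff.2 hij)) _, fun k => ?_⟩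
  have hpoints : insert (c 0) A ∪ (fun j => c j.succ) '' Set.Iio k = A ∪ c '' Set.Iio k.succ := by
    ext x
    simp only [Set.mem_union, Set.mem_insert_iff, Set.mem_image, Set.mem_Iio,
      Fin.exists_fin_succ, Fin.succ_pos, true_and, Fin.succ_lt_succ_iff]
    tauto
  rw [hpoints]
  exact h.2 k.succ

lemma N0_convexHull_add_card_le_natDegree {c : Fin N → ℝ} {d : Fin N → ℕ}
    (h : SeqOrderedOver A c d) {Q : ℝ[X]} (hQ : Q ≠ 0)
    (hvanish : ∀ j, (derivative^[d j] Q).eval (c j) = 0) :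
    N0 Q (convexHull ℝ A) + #{j | d j ≤ Q.natDegree} ≤ Q.natDegree := by
  induction N generalizing A Q with
  | zero => simpa using N0_le_natDegree Q (convexHull ℝ A)
  | succ N ih =>
    by_cases hd0 : d 0 ≤ Q.natDegree
    · have hd0_le (j : Fin N) : d 0 ≤ d j.succ := h.1 (Fin.zero_le _)
      set P := derivative^[d 0] Q with hP
      have hP0 : P ≠ 0 := iterate_derivative_ne_zero_of_le_natDegree hQ hd0
      have hPdeg : P.natDegree = Q.natDegree - d 0 := natDegree_iterate_derivative_eq Q (d 0)
      have hrolle : N0 Q (convexHull ℝ A) ≤ N0 P (convexHull ℝ A) + d 0 :=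
        N0_le_N0_iterate_derivative_add Q (convex_convexHull ℝ A).ordConnected (d 0)
      have hgain : N0 P (convexHull ℝ A) < N0 P (convexHull ℝ (insert (c 0) A)) :=
        N0_lt_N0_of_mem_diff hP0 (convexHull_mono (Set.subset_insert _ _))
          ⟨subset_convexHull ℝ _ (Set.mem_insert _ _), by simpa using h.2 0⟩ (hvanish 0)
      have htail := ih h.tail hP0 fun j => by
        rw [hP, ← Function.iterate_add_apply, Nat.sub_add_cancel (hd0_le j)]
        exact hvanish j.succ
      have hcount : #{j | d j ≤ Q.natDegree} =
          #{j : Fin N | d j.succ - d 0 ≤ P.natDegree} + 1 := by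
        simp only [Fin.card_filter_univ_succ, hd0, if_true, hPdeg,
          tsub_le_tsub_iff_right hd0]
      omega
    · have hempty : #{j | d j ≤ Q.natDegree} = 0 := by
        rw [Finset.card_eq_zero, Finset.filter_eq_empty_iff]
        exact fun j _ hj => hd0 ((h.1 (Fin.zero_le j)).trans hj)
      rw [hempty, add_zero]
      exact N0_le_natDegree Q _

end SequentialOrder

section Interpolation

lemma exists_ne_zero_natDegree_lt_forall_eq_zero {K ι : Type*} [Field K] [Fintype ι]
    (φ : ι → K[X] →ₗ[K] K) {D : ℕ} (hD : Fintype.card ι < D) :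
    ∃ Q : K[X], Q ≠ 0 ∧ Q.natDegree < D ∧ ∀ i, φ i Q = 0 := by
  have : FiniteDimensional K (degreeLT K D) := (degreeLTEquiv K D).symm.finiteDimensional
  let Φ : degreeLT K D →ₗ[K] ι → K := LinearMap.pi φ ∘ₗ (degreeLT K D).subtype
  have hker : LinearMap.ker Φ ≠ ⊥ := by
    apply LinearMap.ker_ne_bot_of_finrank_lt
    rwa [(degreeLTEquiv K D).finrank_eq, Module.finrank_fin_fun, Module.finrank_fintype_fun_eq_card]
  obtain ⟨Q, hQker, hQ⟩ := (Submodule.ne_bot_iff _).1 hker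
  have hQ0 : (Q : K[X]) ≠ 0 := by simpa using hQ
  exact ⟨Q, hQ0, (natDegree_lt_iff_degree_lt hQ0).2 (mem_degreeLT.1 Q.2), congrFun hQker⟩

lemma exists_ne_zero_natDegree_lt_vanishing {K ι : Type*} [Field K] [Fintype ι] (c : ι → K)
    (d : ι → ℕ) (T : Finset K) {D : ℕ} (hD : #T + #{j | d j < D} < D) :
    ∃ Q : K[X], Q ≠ 0 ∧ Q.natDegree < D ∧ (∀ t ∈ T, Q.IsRoot t) ∧
      ∀ j, (derivative^[d j] Q).eval (c j) = 0 := by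
  let φ : T ⊕ {j // d j < D} → K[X] →ₗ[K] K := Sum.elim (fun t => leval (t : K))
    fun j => leval (c j) ∘ₗ derivative ^ d j
  obtain ⟨Q, hQ, hQdeg, hφ⟩ := exists_ne_zero_natDegree_lt_forall_eq_zero φ
    (by rwa [Fintype.card_sum, Fintype.card_coe, Fintype.card_subtype])
  refine ⟨Q, hQ, hQdeg, fun t ht => hφ (.inl ⟨t, ht⟩), fun j => ?_⟩
  by_cases hj : d j < D
  · simpa [φ, Module.End.pow_apply] using hφ (.inr ⟨j, hj⟩)
  · rw [iterate_derivative_eq_zero (by omega), eval_zero]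

lemma prod_X_sub_C_dvd_of_forall_isRoot {K : Type*} [Field K] {T : Finset K} {Q : K[X]}
    (hQ : ∀ t ∈ T, Q.IsRoot t) : ∏ t ∈ T, (X - C t) ∣ Q :=
  Finset.prod_dvd_of_coprime
    (fun _ _ _ _ hab => pairwise_coprime_X_sub_C Function.injective_id hab)
    fun t ht => dvd_iff_isRoot.2 (hQ t ht)

lemma SeqOrderedOver.exists_prod_X_sub_C_mul_vanishing {A : Set ℝ} {N : ℕ} {c : Fin N → ℝ}
    {d : Fin N → ℕ} (h : SeqOrderedOver A c d) {T : Finset ℝ} (hT : ∀ t ∈ T, t ∈ A) :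
    ∃ R : ℝ[X], R ≠ 0 ∧ (∀ x ∈ A, R.eval x ≠ 0) ∧
      ((∏ t ∈ T, (X - C t)) * R).natDegree ≤ #T + N ∧
      ∀ j, (derivative^[d j] ((∏ t ∈ T, (X - C t)) * R)).eval (c j) = 0 := by
  have hlarge : #T + #{j | d j < #T + N + 1} < #T + N + 1 := by
    have := Finset.card_le_univ {j | d j < #T + N + 1}
    rw [Fintype.card_fin] at this
    omega
  have hexists : ∃ D, #T + #{j | d j < D} < D := ⟨_, hlarge⟩
  obtain ⟨Q, hQ, hQdeg, hQT, hQc⟩ :=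
    exists_ne_zero_natDegree_lt_vanishing c d T (Nat.find_spec hexists)
  obtain ⟨R, rfl⟩ := prod_X_sub_C_dvd_of_forall_isRoot hQT
  refine ⟨R, right_ne_zero_of_mul hQ, fun x hx hRx => ?_, ?_, hQc⟩
  · set Q := (∏ t ∈ T, (X - C t)) * R with hQR
    have hroots : #T < N0 Q A := card_lt_N0_of_isRoot_cofactor hQ hT hQR hx hRx
    have hhull : N0 Q A ≤ N0 Q (convexHull ℝ A) := N0_mono Q (subset_convexHull ℝ A)
    have hcount := N0_convexHull_add_card_le_natDegree h hQ hQc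
    have hlt_le : #{j | d j < Q.natDegree} ≤ #{j | d j ≤ Q.natDegree} :=
      Finset.card_le_card (Finset.monotone_filter_right _ fun _ _ => le_of_lt)
    exact Nat.find_min hexists hQdeg (by omega)
  · have := Nat.find_min' hexists hlarge
    omega

end Interpolation

/-- The roots of `p` in `A` of odd multiplicity. If `p ≠ 0`, these are exactly the points of
`A` at which `p` changes sign. -/
def oddRoots (p : ℝ[X]) (A : Set ℝ) : Finset ℝ :=
  {x ∈ p.roots.toFinset | x ∈ A ∧ Odd (p.rootMultiplicity x)}

section SignChanges

variable {p : ℝ[X]} {A : Set ℝ} {t : ℝ}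

lemma mem_of_mem_oddRoots (ht : t ∈ oddRoots p A) : t ∈ A :=
  (Finset.mem_filter.1 ht).2.1

lemma odd_rootMultiplicity_of_mem_oddRoots (ht : t ∈ oddRoots p A) :
    Odd (p.rootMultiplicity t) :=
  (Finset.mem_filter.1 ht).2.2

lemma signChangeAt_of_odd_rootMultiplicity {p : ℝ[X]} {t : ℝ} (h : Odd (p.rootMultiplicity t)) :
    SignChangeAt p t := by
  have hp : p ≠ 0 := by
    rintro rfl
    simp at h
  obtain ⟨q, hpq, hdvd⟩ := exists_eq_pow_rootMultiplicity_mul_and_not_dvd p hp t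
  have hqt : 0 < q.eval t * q.eval t := mul_self_pos.2 (mt dvd_iff_isRoot.2 hdvd)
  have hcont : Continuous fun ε => q.eval (t - ε) * q.eval (t + ε) := by fun_prop
  have hnear : ∀ᶠ ε in nhdsWithin 0 (Set.Ioi 0), 0 < q.eval (t - ε) * q.eval (t + ε) :=
    nhdsWithin_le_nhds (hcont.continuousAt.eventually (lt_mem_nhds (by simpa using hqt)))
  intro δ hδ
  obtain ⟨ε, hq, hε, hεδ⟩ := (hnear.and (Ioo_mem_nhdsGT hδ)).exists
  refine ⟨t - ε, ⟨by linarith, by linarith⟩, t + ε, ⟨by linarith, by linarith⟩, ?_⟩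
  have heval : p.eval (t - ε) * p.eval (t + ε) =
      -(ε ^ p.rootMultiplicity t) ^ 2 * (q.eval (t - ε) * q.eval (t + ε)) := by
    generalize p.rootMultiplicity t = m at hpq h
    simp only [hpq, eval_mul, eval_pow, eval_sub, eval_X, eval_C, sub_sub_cancel_left,
      add_sub_cancel_left, h.neg_pow]
    ring
  rw [heval]
  exact mul_neg_of_neg_of_pos (neg_neg_of_pos (by positivity)) hq

lemma prod_map_eq_prod_odd_count_mul_sq {α M : Type*} [DecidableEq α] [CommMonoid M]
    (s : Multiset α) (f : α → M) :
    (s.map f).prod = (∏ x ∈ s.toFinset with Odd (s.count x), f x) *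
      (∏ x ∈ s.toFinset, f x ^ (s.count x / 2)) ^ 2 := by
  rw [Finset.prod_multiset_map_count, Finset.prod_filter, ← Finset.prod_pow,
    ← Finset.prod_mul_distrib]
  refine Finset.prod_congr rfl fun x _ => ?_
  rw [← pow_mul]
  split_ifs with hx
  · rw [← pow_succ', Nat.div_two_mul_two_add_one_of_odd hx]
  · rw [one_mul, Nat.div_two_mul_two_of_even (Nat.not_odd_iff_even.1 hx)]

lemma exists_eq_prod_oddRoots_mul_sq_mul (hp : p ≠ 0) (A : Set ℝ) :
    ∃ G K : ℝ[X], p = (∏ t ∈ oddRoots p A, (X - C t)) * G ^ 2 * K ∧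
      ∀ x ∈ A, K.eval x ≠ 0 := by
  set M := p.roots.filter (· ∈ A) with hM
  obtain ⟨K, hpK⟩ := (Multiset.prod_X_sub_C_dvd_iff_le_roots hp M).2 (Multiset.filter_le _ _)
  have hodd : {x ∈ M.toFinset | Odd (M.count x)} = oddRoots p A := by
    ext x
    by_cases hxA : x ∈ A <;> simp [oddRoots, hM, hxA, count_roots]
  refine ⟨∏ x ∈ M.toFinset, (X - C x) ^ (M.count x / 2), K, ?_, fun x hx hKx => ?_⟩
  · rw [← hodd, ← prod_map_eq_prod_odd_count_mul_sq]
    exact hpK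
  · exact (card_lt_N0_of_isRoot_cofactor hp (fun y hy => (Multiset.mem_filter.1 hy).2) hpK hx
      hKx).false

lemma nonneg_or_nonpos_on_closure_of_ne_zero {Y : Type*} [TopologicalSpace Y] {s : Set Y}
    (hs : IsPreconnected s) {f : Y → ℝ} (hf : Continuous f) (hne : ∀ x ∈ s, f x ≠ 0) :
    (∀ x ∈ closure s, 0 ≤ f x) ∨ ∀ x ∈ closure s, f x ≤ 0 := by
  have hsign : (∀ x ∈ s, 0 ≤ f x) ∨ ∀ x ∈ s, f x ≤ 0 := by
    by_contra! ⟨⟨x, hx, hfx⟩, y, hy, hfy⟩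
    obtain ⟨z, hz, hfz⟩ := hs.intermediate_value hx hy hf.continuousOn ⟨hfx.le, hfy.le⟩
    exact hne z hz hfz
  exact hsign.imp
    (fun h x hx => closure_minimal h (isClosed_le continuous_const hf) hx)
    (fun h x hx => closure_minimal h (isClosed_le hf continuous_const) hx)

lemma prod_oddRoots_mul_mul_nonneg_or_nonpos (hp : p ≠ 0) (hA : IsPreconnected A) {R : ℝ[X]}
    (hR : ∀ x ∈ A, R.eval x ≠ 0) :
    (∀ x ∈ closure A, 0 ≤ ((∏ t ∈ oddRoots p A, (X - C t)) * R * p).eval x) ∨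
      ∀ x ∈ closure A, ((∏ t ∈ oddRoots p A, (X - C t)) * R * p).eval x ≤ 0 := by
  obtain ⟨G, K, hpGK, hK⟩ := exists_eq_prod_oddRoots_mul_sq_mul hp A
  set W := ∏ t ∈ oddRoots p A, (X - C t)
  have hfactor (x : ℝ) : (W * R * p).eval x = (W * G).eval x ^ 2 * (K * R).eval x := by
    rw [hpGK]
    simp only [eval_mul, eval_pow]
    ring
  have hKR : ∀ x ∈ A, (K * R).eval x ≠ 0 := fun x hx => by
    rw [eval_mul]
    exact mul_ne_zero (hK x hx) (hR x hx)
  simp only [hfactor]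
  exact (nonneg_or_nonpos_on_closure_of_ne_zero hA (K * R).continuous hKR).imp
    (fun h x hx => mul_nonneg (sq_nonneg _) (h x hx))
    (fun h x hx => mul_nonpos_of_nonneg_of_nonpos (sq_nonneg _) (h x hx))

end SignChanges

section Integration

lemma integral_pos_of_integral_sq_pos {Ω : Type*} [MeasurableSpace Ω] {ν : Measure Ω} {f : Ω → ℝ}
    (hint : Integrable f ν) (hf : 0 ≤ᵐ[ν] f) (hsq : 0 < ∫ x, f x ^ 2 ∂ν) : 0 < ∫ x, f x ∂ν := by
  refine (integral_nonneg_of_ae hf).lt_of_ne fun h0 => hsq.ne' ?_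
  have hzero : f =ᵐ[ν] 0 := (integral_eq_zero_iff_of_nonneg_ae hf hint).1 h0.symm
  refine integral_eq_zero_of_ae ?_
  filter_upwards [hzero] with x hx
  simp [hx]

variable {μ : Measure ℝ} [IsFiniteMeasureOnCompacts μ]

lemma integrableOn_eval {s : Set ℝ} (hs : IsCompact s) (p : ℝ[X]) :
    IntegrableOn (fun x => p.eval x) s μ :=
  p.continuous.continuousOn.integrableOn_compact hs

lemma setIntegral_eval_ne_zero {s : Set ℝ} (hs : IsCompact s)
    (hμ : ∀ p : ℝ[X], p ≠ 0 → 0 < ∫ x in s, p.eval x ^ 2 ∂μ) {p : ℝ[X]} (hp : p ≠ 0)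
    (hsign : (∀ x ∈ s, 0 ≤ p.eval x) ∨ ∀ x ∈ s, p.eval x ≤ 0) :
    ∫ x in s, p.eval x ∂μ ≠ 0 := by
  have hpos (q : ℝ[X]) (hq : q ≠ 0) (hnonneg : ∀ x ∈ s, 0 ≤ q.eval x) :
      0 < ∫ x in s, q.eval x ∂μ :=
    integral_pos_of_integral_sq_pos (integrableOn_eval hs q)
      (ae_restrict_of_forall_mem hs.measurableSet hnonneg) (hμ q hq)
  rcases hsign with hnonneg | hnonpos
  · exact (hpos p hp hnonneg).ne'
  · have hneg := hpos (-p) (neg_ne_zero.2 hp) (by simpa using hnonpos)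
    simp only [eval_neg, integral_neg] at hneg
    exact (neg_pos.1 hneg).ne

end Integration

section SobolevOrthogonality

lemma linearMap_eq_zero_of_forall_X_pow {R M : Type*} [Semiring R] [AddCommMonoid M]
    [Module R M] (φ : R[X] →ₗ[R] M) {n : ℕ} (hφ : ∀ m < n, φ (X ^ m) = 0) {Q : R[X]}
    (hQ : Q.natDegree < n) : φ Q = 0 := by
  rw [Q.as_sum_range' n hQ, map_sum]
  refine Finset.sum_eq_zero fun m hm => ?_
  rw [← smul_X_eq_monomial, map_smul, hφ m (Finset.mem_range.1 hm), smul_zero]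

variable {μ : Measure ℝ} [IsFiniteMeasureOnCompacts μ] {N : ℕ} {c : Fin N → ℝ}
  {d : Fin N → ℕ} {η : Fin N → ℝ} {S : ℝ[X]} {n : ℕ}

lemma isLinearMap_sobInner_left (g : ℝ[X]) : IsLinearMap ℝ fun f => sobInner μ c d η f g where
  map_add f₁ f₂ := by
    have hint (f : ℝ[X]) : IntegrableOn (fun x => f.eval x * g.eval x) (Set.Icc (-1) 1) μ := by
      simpa only [eval_mul] using integrableOn_eval isCompact_Icc (f * g)
    simp only [sobInner, eval_add, add_mul, iterate_map_add, mul_add, Finset.sum_add_distrib,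
      integral_add (hint f₁) (hint f₂)]
    ring
  map_smul r f := by
    simp only [sobInner, eval_smul, smul_eq_mul, mul_add, Finset.mul_sum, iterate_derivative_smul,
      mul_assoc, mul_left_comm _ r, integral_const_mul]

lemma sobInner_eq_zero_of_natDegree_lt (hS : ∀ m < n, sobInner μ c d η (X ^ m) S = 0)
    {Q : ℝ[X]} (hQ : Q.natDegree < n) : sobInner μ c d η Q S = 0 :=
  linearMap_eq_zero_of_forall_X_pow ((isLinearMap_sobInner_left S).mk' _) hS hQ

theorem statement0_general
    (hμ : ∀ p : ℝ[X], p ≠ 0 → 0 < ∫ x in Set.Icc (-1 : ℝ) 1, p.eval x ^ 2 ∂μ)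
    (hseq : SeqOrdered c d) (hS : S ≠ 0)
    (hSorth : ∀ m < n, sobInner μ c d η (X ^ m) S = 0) :
    ∃ T : Finset ℝ, n - N ≤ #T ∧ ∀ t ∈ T, t ∈ Set.Ioo (-1 : ℝ) 1 ∧ SignChangeAt S t := by
  refine ⟨oddRoots S (Set.Ioo (-1) 1), ?_, fun t ht => ⟨mem_of_mem_oddRoots ht,
    signChangeAt_of_odd_rootMultiplicity (odd_rootMultiplicity_of_mem_oddRoots ht)⟩⟩
  by_contra! hcard
  have hover : SeqOrderedOver (Set.Ioo (-1) 1) c d := hseq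
  obtain ⟨R, hR, hRne, hdeg, hvanish⟩ :=
    hover.exists_prod_X_sub_C_mul_vanishing fun t ht => mem_of_mem_oddRoots (p := S) ht
  set Q := (∏ t ∈ oddRoots S (Set.Ioo (-1) 1), (X - C t)) * R
  have horth : ∫ x in Set.Icc (-1 : ℝ) 1, (Q * S).eval x ∂μ = 0 := by
    simpa [sobInner, hvanish] using sobInner_eq_zero_of_natDegree_lt hSorth (Q := Q) (by omega)
  have hQS : Q * S ≠ 0 :=
    mul_ne_zero (mul_ne_zero (Finset.prod_ne_zero_iff.2 fun t _ => X_sub_C_ne_zero t) hR) hS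
  have hsign := prod_oddRoots_mul_mul_nonneg_or_nonpos hS isPreconnected_Ioo hRne
  rw [closure_Ioo (by norm_num)] at hsign
  exact setIntegral_eval_ne_zero isCompact_Icc hμ hQS hsign horth

end SobolevOrthogonality

/-- If the discrete Sobolev inner product is sequentially-ordered,
then for every `n` the Sobolev orthogonal polynomial `S n` has at least `n - N`
changes of sign on `(-1, 1)`. -/
theorem statement0
    (μ : Measure ℝ) [IsFiniteMeasure μ]
    (hμsupp : μ (Set.Icc (-1:ℝ) 1)ᶜ = 0)
    (hμinf : ∀ p : Polynomial ℝ, p ≠ 0 → 0 < ∫ x in Set.Icc (-1:ℝ) 1, (p.eval x) ^ 2 ∂μ)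
    {N : ℕ} (c : Fin N → ℝ) (d : Fin N → ℕ)
    (hc : ∀ j, c j ∉ Set.Icc (-1:ℝ) 1)
    (η : Fin N → ℝ) (hη : ∀ j, 0 < η j)
    (hseq : SeqOrdered c d)
    (S : ℕ → Polynomial ℝ)
    (hSmonic : ∀ n, (S n).Monic) (hSdeg : ∀ n, (S n).natDegree = n)
    (hSorth : ∀ n, ∀ m < n, sobInner μ c d η (X ^ m) (S n) = 0)
    (n : ℕ) :
    ∃ T : Finset ℝ, n - N ≤ T.card ∧
      ∀ t ∈ T, t ∈ Set.Ioo (-1:ℝ) 1 ∧ SignChangeAt (S n) t := by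
  exact statement0_general hμinf hseq (hSmonic n).ne_zero (hSorth n)

end
end

section
/- For n > d and every polynomial f with deg f ≤ n − d − 1, the Sobolev orthogonal polynomial S_n satisfies ∫_{−1}^{1} S_n(x) f(x) ρ(x) dμ(x) = 0; that is, S_n is quasi-orthogonal of order d with respect to the measure dμ_ρ = ρ dμ. -/
open MeasureTheory Polynomial Filter
open scoped Classical

noncomputable section

/-!
The polynomial `f * ρ` has degree less than `n`, so it is Sobolev-orthogonal to `S n`. Since `ρ`
vanishes to order `d j + 1` at `c j`, every derivative of `f * ρ` that enters the discrete part of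
the inner product vanishes there, and only the integral survives.
-/

theorem map_eq_zero_of_degree_lt {R M : Type*} [Semiring R] [AddCommMonoid M] [Module R M]
    {L : R[X] →ₗ[R] M} {n : ℕ} (hL : ∀ m < n, L (X ^ m) = 0) {p : R[X]} (hp : p.degree < n) :
    L p = 0 := by
  have degreeLT_le_ker : degreeLT R n ≤ LinearMap.ker L := by
    rw [degreeLT_eq_span_X_pow, Submodule.span_le]
    simpa [Set.subset_def] using hL
  exact degreeLT_le_ker (mem_degreeLT.2 hp)

theorem eval_iterate_derivative_eq_zero_of_pow_dvd {R : Type*} [CommRing R] {p : R[X]} {a : R}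
    {k i : ℕ} (hp : (X - C a) ^ k ∣ p) (hi : i < k) : (derivative^[i] p).eval a = 0 :=
  dvd_iff_isRoot.1 <| (dvd_pow_self _ (Nat.sub_ne_zero_of_lt hi)).trans
    (pow_sub_dvd_iterate_derivative_of_pow_dvd i hp)

section SobolevForm

variable (μ : Measure ℝ) {N : ℕ} (c : Fin N → ℝ) (d : Fin N → ℕ) (η : Fin N → ℕ → ℝ)

theorem sobInner2_add_left [IsFiniteMeasureOnCompacts μ] (p q g : ℝ[X]) :
    sobInner2 μ c d η (p + q) g = sobInner2 μ c d η p g + sobInner2 μ c d η q g := by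
  have integrableOn_mul (r : ℝ[X]) :
      IntegrableOn (fun x => r.eval x * g.eval x) (Set.Icc (-1) 1) μ :=
    (r.continuous.mul g.continuous).continuousOn.integrableOn_compact isCompact_Icc
  simp only [sobInner2, eval_add, add_mul, iterate_map_add, mul_add, Finset.sum_add_distrib]
  rw [integral_add (integrableOn_mul p) (integrableOn_mul q), add_add_add_comm]

theorem sobInner2_smul_left (a : ℝ) (p g : ℝ[X]) :
    sobInner2 μ c d η (a • p) g = a * sobInner2 μ c d η p g := by
  simp only [sobInner2, iterate_derivative_smul, eval_smul, smul_eq_mul, mul_assoc, mul_add,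
    integral_const_mul, Finset.mul_sum, mul_left_comm a (η _ _)]

/-- The Sobolev product with a fixed second factor `g`, as a linear form in the first factor. -/
def sobInner2Left [IsFiniteMeasureOnCompacts μ] (g : ℝ[X]) : ℝ[X] →ₗ[ℝ] ℝ where
  toFun p := sobInner2 μ c d η p g
  map_add' p q := sobInner2_add_left μ c d η p q g
  map_smul' a p := sobInner2_smul_left μ c d η a p g

variable {μ c d η}

theorem sobInner2_eq_zero_of_degree_lt [IsFiniteMeasureOnCompacts μ] {g : ℝ[X]} {n : ℕ}
    (hg : ∀ m < n, sobInner2 μ c d η (X ^ m) g = 0) {p : ℝ[X]} (hp : p.degree < n) :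
    sobInner2 μ c d η p g = 0 :=
  map_eq_zero_of_degree_lt (L := sobInner2Left μ c d η g) hg hp

theorem sobInner2_eq_integral_of_pow_dvd {p : ℝ[X]}
    (hp : ∀ j, (X - C (c j)) ^ (d j + 1) ∣ p) (g : ℝ[X]) :
    sobInner2 μ c d η p g = ∫ x in Set.Icc (-1 : ℝ) 1, p.eval x * g.eval x ∂μ := by
  refine add_eq_left.2 <| Finset.sum_eq_zero fun j _ => Finset.sum_eq_zero fun i hi => ?_
  rw [eval_iterate_derivative_eq_zero_of_pow_dvd (hp j) (Finset.mem_range.1 hi), mul_zero,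
    zero_mul]

end SobolevForm

section Rho

variable {N : ℕ} (c : Fin N → ℝ) (d : Fin N → ℕ)

theorem natDegree_rhoPoly_le : (rhoPoly c d).natDegree ≤ N + ∑ j, d j := by
  let left := Finset.univ.filter fun j => c j < -1
  let right := Finset.univ.filter fun j => 1 < c j
  have left_disjoint_right : Disjoint left right :=
    Finset.disjoint_filter.2 fun j _ hl hr => by linarith
  have left_degree : (∏ j ∈ left, (X - C (c j)) ^ (d j + 1)).natDegree ≤ ∑ j ∈ left, (d j + 1) :=
    (natDegree_prod_le _ _).trans <| Finset.sum_le_sum fun j _ => by compute_degree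
  have right_degree :
      (∏ j ∈ right, (C (c j) - X) ^ (d j + 1)).natDegree ≤ ∑ j ∈ right, (d j + 1) :=
    (natDegree_prod_le _ _).trans <| Finset.sum_le_sum fun j _ => by compute_degree
  calc (rhoPoly c d).natDegree
      ≤ ∑ j ∈ left, (d j + 1) + ∑ j ∈ right, (d j + 1) :=
        natDegree_mul_le_of_le left_degree right_degree
    _ = ∑ j ∈ left ∪ right, (d j + 1) := (Finset.sum_union left_disjoint_right).symm
    _ ≤ ∑ j, (d j + 1) := Finset.sum_le_sum_of_subset (Finset.subset_univ _)
    _ = N + ∑ j, d j := by simp [Finset.sum_add_distrib, add_comm]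

variable {c}

theorem pow_dvd_rhoPoly {j : Fin N} (hj : c j ∉ Set.Icc (-1 : ℝ) 1) :
    (X - C (c j)) ^ (d j + 1) ∣ rhoPoly c d := by
  obtain hlt | hgt : c j < -1 ∨ 1 < c j := by
    simpa only [Set.mem_Icc, not_and_or, not_le] using hj
  · exact (Finset.dvd_prod_of_mem (fun k => (X - C (c k)) ^ (d k + 1))
      (by simpa using hlt)).mul_right _
  · have factor_dvd : (X - C (c j)) ^ (d j + 1) ∣ (C (c j) - X) ^ (d j + 1) :=
      pow_dvd_pow_of_dvd (neg_sub (C (c j)) X ▸ neg_dvd.2 dvd_rfl) _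
    exact (factor_dvd.trans (Finset.dvd_prod_of_mem (fun k => (C (c k) - X) ^ (d k + 1))
      (by simpa using hgt))).mul_left _

end Rho

theorem statement4_general (μ : Measure ℝ) [IsFiniteMeasureOnCompacts μ] {N : ℕ}
    (c : Fin N → ℝ) (d : Fin N → ℕ) (hc : ∀ j, c j ∉ Set.Icc (-1 : ℝ) 1) (η : Fin N → ℕ → ℝ)
    {n : ℕ} (S : ℝ[X]) (hS : ∀ m < n, sobInner2 μ c d η (X ^ m) S = 0)
    (f : ℝ[X]) (hf : f.natDegree + (N + ∑ j, d j) < n) :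
    ∫ x in Set.Icc (-1 : ℝ) 1, S.eval x * f.eval x * (rhoPoly c d).eval x ∂μ = 0 := by
  have degree_lt : (f * rhoPoly c d).degree < n :=
    degree_le_natDegree.trans_lt <| Nat.cast_lt.2 <|
      (natDegree_mul_le_of_le le_rfl (natDegree_rhoPoly_le c d)).trans_lt hf
  have pow_dvd (j : Fin N) : (X - C (c j)) ^ (d j + 1) ∣ f * rhoPoly c d :=
    (pow_dvd_rhoPoly d (hc j)).mul_left f
  calc ∫ x in Set.Icc (-1 : ℝ) 1, S.eval x * f.eval x * (rhoPoly c d).eval x ∂μ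
      = ∫ x in Set.Icc (-1 : ℝ) 1, (f * rhoPoly c d).eval x * S.eval x ∂μ := by
        simp only [eval_mul, mul_assoc, mul_comm]
    _ = sobInner2 μ c d η (f * rhoPoly c d) S :=
        (sobInner2_eq_integral_of_pow_dvd pow_dvd S).symm
    _ = 0 := sobInner2_eq_zero_of_degree_lt hS degree_lt

/-- Quasi-orthogonality of order `d`: if `n > d` and
`deg f ≤ n - d - 1` then `∫ S_n f ρ dμ = 0`. -/
theorem statement4
    (μ : Measure ℝ) [IsFiniteMeasure μ]
    (hμsupp : μ (Set.Icc (-1:ℝ) 1)ᶜ = 0)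
    (hμinf : ∀ p : Polynomial ℝ, p ≠ 0 → 0 < ∫ x in Set.Icc (-1:ℝ) 1, (p.eval x) ^ 2 ∂μ)
    {N : ℕ} (c : Fin N → ℝ) (d : Fin N → ℕ)
    (hc : ∀ j, c j ∉ Set.Icc (-1:ℝ) 1)
    (η : Fin N → ℕ → ℝ) (hη : ∀ j i, i ≤ d j → 0 ≤ η j i) (hηd : ∀ j, 0 < η j (d j))
    (S : ℕ → Polynomial ℝ)
    (hSmonic : ∀ n, (S n).Monic) (hSdeg : ∀ n, (S n).natDegree = n)
    (hSorth : ∀ n, ∀ m < n, sobInner2 μ c d η (X ^ m) (S n) = 0)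
    (n : ℕ) (hn : N + ∑ j, d j < n)
    (f : Polynomial ℝ) (hf : f.natDegree ≤ n - (N + ∑ j, d j) - 1) :
    (∫ x in Set.Icc (-1:ℝ) 1, (S n).eval x * f.eval x * (rhoPoly c d).eval x ∂μ) = 0 := by
  exact statement4_general μ c d hc η (S n) (hSorth n) f (by omega)

end
end
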